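/- Let n be a positive integer. A subdirectly irreducible modular ortholattice L has dimension at most n if and only if L is n-distributive; consequently, L has dimension exactly n if and only if L is n-distributive but not (n−1)-distributive. -/

import Mathlib

/-- An ortholattice: a bounded lattice with an order-reversing involution `x ↦ x′`
satisfying `x ⊓ x′ = ⊥` and `x ⊔ x′ = ⊤`. -/
class Ortholattice (α : Type*) extends Lattice α, BoundedOrder α where
  compl : α → α
  compl_antitone : ∀ x y : α, x ≤ y → compl y ≤ compl x
  compl_compl : ∀ x : α, compl (compl x) = x
  inf_compl : ∀ x : α, x ⊓ compl x = ⊥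
  sup_compl : ∀ x : α, x ⊔ compl x = ⊤

postfix:max "′" => Ortholattice.compl

/-- A lattice has finite dimension `d` if some maximal chain has exactly `d + 1` elements. -/
def HasDim (α : Type*) [Lattice α] (d : ℕ) : Prop :=
  ∃ s : Set α, IsMaxChain (· ≤ ·) s ∧ s.ncard = d + 1

/-- Huhn's `n`-distributive law:
`x ⊓ ⋁_{i=0}^{n} y i = ⋁_{j=0}^{n} (x ⊓ ⋁_{i ≠ j} y i)`. -/
def NDistributive (α : Type*) [Lattice α] [OrderBot α] (n : ℕ) : Prop :=
  ∀ (x : α) (y : Fin (n + 1) → α),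
    x ⊓ Finset.univ.sup y =
      Finset.univ.sup fun j : Fin (n + 1) => x ⊓ (Finset.univ.erase j).sup y

/-- A congruence of an ortholattice: an equivalence relation compatible with
`⊓`, `⊔` and `′`. -/
def IsOLCongruence (α : Type*) [Ortholattice α] (r : α → α → Prop) : Prop :=
  Equivalence r ∧
  (∀ a b c d : α, r a b → r c d → r (a ⊓ c) (b ⊓ d) ∧ r (a ⊔ c) (b ⊔ d)) ∧
  (∀ a b : α, r a b → r a′ b′)

/-- An ortholattice is subdirectly irreducible if it has a least nontrivial congruence. -/
def SubdirectlyIrreducible (α : Type*) [Ortholattice α] : Prop :=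
  ∃ r : α → α → Prop, IsOLCongruence α r ∧ (∃ a b : α, a ≠ b ∧ r a b) ∧
    ∀ s : α → α → Prop, IsOLCongruence α s → (∃ a b : α, a ≠ b ∧ s a b) →
      ∀ a b : α, r a b → s a b

/-!
The dimension of a modular lattice of finite height is the height of its top element, and an
irredundant join of `n + 1` elements produces a chain of length `n + 1`. Hence dimension at most
`n` forces `n`-distributivity in any bounded modular lattice.

Conversely, let `L` be a subdirectly irreducible modular ortholattice and write `u ∇ v` if `u` lies
below every complement of `v`. This relation is symmetric and passes to perspective elements, which
makes `V^∇ = {u | u ∇ v for all v ∈ V}` the kernel of a congruence for every `V ⊆ L`. Hence `u ∇ v`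
fails for all nonzero `u` and `v`: otherwise the congruences with kernels `{v}^∇` and `{v}^∇^∇`
would be nontrivial with trivial intersection. For disjoint `u` and `v`, failure of `u ∇ v` yields a
nonzero `c ≤ u ⊔ v` disjoint from both. A chain of length `n + 1` gives `n + 1` independent nonzero
elements, and adding one of them at a time produces a nonzero element `x` below their join which is
disjoint from the join of any `n` of them. Such an `x` contradicts `n`-distributivity.
-/

section Dimension

open Order

variable {α : Type*} [Lattice α]

theorem exists_covBy_of_isMaxChain {s : Set α} (hs : IsMaxChain (· ≤ ·) s)
    (hfin : s.Finite) {x : α} (hx : x ∈ s) (hne : {y ∈ s | y < x}.Nonempty) :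
    ∃ z ∈ s, z ⋖ x ∧ ∀ y ∈ s, y < x → y ≤ z := by
  obtain ⟨z, ⟨hz, hzx⟩, hmax⟩ := (hfin.sep (· < x)).exists_maximal hne
  have hle : ∀ y ∈ s, y < x → y ≤ z := fun y hy hyx ↦
    (hs.isChain.total hy hz).elim id fun hzy ↦ hmax ⟨hy, hyx⟩ hzy
  refine ⟨z, hz, ⟨hzx, fun w hzw hwx ↦ ?_⟩, hle⟩
  have hw : w ∈ Flag.ofIsMaxChain s hs := Flag.mem_iff_forall_le_or_ge.2 fun y hy ↦ by
    by_cases hyx : y < x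
    · exact .inr ((hle y hy hyx).trans hzw.le)
    · exact .inl (hwx.le.trans (hs.isChain.le_of_not_gt hy hx hyx))
  exact hzw.not_ge (hle w hw hwx)

theorem height_le_add_one_of_covBy [IsLowerModularLattice α] {a b : α} (hab : a ⋖ b) :
    height b ≤ height a + 1 := by
  obtain ha | ha := eq_or_ne (height a) ⊤
  · simp only [ha, top_add, le_top]
  lift height a to ℕ using ha with n hn
  induction n using Nat.strong_induction_on generalizing a b with | _ n ih
  refine height_le_coe_iff.2 fun x hxb ↦ ENat.lt_natCast_add_one_iff.2 ?_
  by_cases hxa : x ≤ a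
  · exact (height_mono hxa).trans hn.ge
  have hsup : x ⊔ a = b :=
    (hab.eq_or_eq le_sup_right (sup_le hxb.le hab.le)).resolve_left (by simpa using hxa)
  have hcov : x ⊓ a ⋖ x := inf_covBy_of_covBy_sup_right (hsup ▸ hab)
  have hlt : x ⊓ a < a := inf_le_right.lt_of_ne fun h ↦
    hxb.ne ((sup_eq_left.2 (inf_eq_right.1 h)).symm.trans hsup)
  have hadd : height (x ⊓ a) + 1 ≤ n := hn ▸ height_add_one_le hlt
  have hne : height (x ⊓ a) ≠ ⊤ := fun h ↦ by simp [h] at hadd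
  lift height (x ⊓ a) to ℕ using hne with m hm
  exact (ih m (by exact_mod_cast hadd) hcov hm).trans (by exact_mod_cast hadd)

theorem height_eq_add_one_of_covBy [IsLowerModularLattice α] {a b : α} (hab : a ⋖ b) :
    height b = height a + 1 :=
  (height_le_add_one_of_covBy hab).antisymm (height_add_one_le hab.lt)

theorem height_eq_encard_of_isMaxChain [OrderBot α] [IsLowerModularLattice α] {s : Set α}
    (hs : IsMaxChain (· ≤ ·) s) (hfin : s.Finite) {x : α} (hx : x ∈ s) :
    height x = {y ∈ s | y < x}.encard := by
  refine (hfin.wellFoundedOn (r := (· < ·))).induction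
    (P := fun x ↦ height x = {y ∈ s | y < x}.encard) hx fun x hx ih ↦ ?_
  obtain hempty | hne := {y ∈ s | y < x}.eq_empty_or_nonempty
  · have hbot : x = ⊥ := by
      by_contra hne
      exact (hempty.subset ⟨hs.bot_mem, bot_lt_iff_ne_bot.2 hne⟩ : ⊥ ∈ (∅ : Set α))
    rw [hempty, Set.encard_empty, hbot, height_bot]
  · obtain ⟨z, hz, hzx, hle⟩ := exists_covBy_of_isMaxChain hs hfin hx hne
    have hinsert : {y ∈ s | y < x} = insert z {y ∈ s | y < z} := by
      ext y
      refine ⟨fun ⟨hy, hyx⟩ ↦ (hle y hy hyx).eq_or_lt.imp_right fun h ↦ ⟨hy, h⟩, ?_⟩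
      rintro (rfl | ⟨hy, hyz⟩)
      exacts [⟨hz, hzx.lt⟩, ⟨hy, hyz.trans hzx.lt⟩]
    rw [hinsert, Set.encard_insert_of_notMem fun h ↦ h.2.false, ← ih z hz hzx.lt,
      height_eq_add_one_of_covBy hzx]

theorem finite_of_isChain_of_height_top_ne_top [OrderTop α] (hα : height (⊤ : α) ≠ ⊤) {s : Set α}
    (hs : IsChain (· ≤ ·) s) : s.Finite := by
  have hlt_top (x : α) : height x < ⊤ := (height_mono le_top).trans_lt hα.lt_top
  have hinj : s.InjOn height := fun x hx y hy hxy ↦ by_contra fun hne ↦ by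
    obtain hlt | hlt := hs.lt_of_le hx hy hne
    · exact (height_strictMono hlt (hlt_top x)).ne hxy
    · exact (height_strictMono hlt (hlt_top y)).ne' hxy
  lift height (⊤ : α) to ℕ using hα with n hn
  refine .of_injOn (fun x _ ↦ ?_) hinj ((Set.finite_Iic n).image (Nat.cast : ℕ → ℕ∞))
  obtain ⟨m, hm, hmn⟩ := ENat.le_natCast_iff.1 (hn ▸ height_mono (le_top : x ≤ ⊤))
  exact ⟨m, hmn, hm.symm⟩

variable [BoundedOrder α] [IsLowerModularLattice α]

theorem encard_eq_height_top_add_one_of_isMaxChain {s : Set α} (hs : IsMaxChain (· ≤ ·) s) :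
    s.encard = height (⊤ : α) + 1 := by
  obtain hfin | hinf := s.finite_or_infinite
  · rw [height_eq_encard_of_isMaxChain hs hfin hs.top_mem,
      ← Set.encard_insert_of_notMem fun h ↦ h.2.false]
    congr 1
    ext y
    constructor
    · intro hy
      exact (le_top.eq_or_lt).imp_right fun h ↦ ⟨hy, h⟩
    · rintro (rfl | h)
      exacts [hs.top_mem, h.1]
  · have htop : height (⊤ : α) = ⊤ := by
      by_contra hne
      exact hinf (finite_of_isChain_of_height_top_ne_top hne hs.isChain)
    rw [hinf.encard_eq, htop, top_add]

theorem hasDim_iff_height_top_eq {d : ℕ} : HasDim α d ↔ height (⊤ : α) = d := by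
  have hncard (s : Set α) (hs : IsMaxChain (· ≤ ·) s) :
      s.ncard = d + 1 ↔ height (⊤ : α) = d := by
    rw [Set.ncard, ENat.toNat_eq_iff d.succ_ne_zero,
      encard_eq_height_top_add_one_of_isMaxChain hs, Nat.cast_add_one]
    exact (ENat.add_left_injective_of_ne_top ENat.one_ne_top).eq_iff
  exact ⟨fun ⟨s, hs, hcard⟩ ↦ (hncard s hs).1 hcard,
    fun h ↦ ⟨_, maxChain_spec, (hncard _ maxChain_spec).2 h⟩⟩

theorem exists_le_hasDim_iff_height_top_le {n : ℕ} :
    (∃ d ≤ n, HasDim α d) ↔ height (⊤ : α) ≤ n := by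
  simp only [hasDim_iff_height_top_eq, ENat.le_natCast_iff, and_comm]

end Dimension

section NDistributive

open Order

theorem card_le_height_sup {ι α : Type*} [DecidableEq ι] [SemilatticeSup α] [OrderBot α]
    {s : Finset ι} {y : ι → α} (hy : ∀ i ∈ s, ¬ y i ≤ (s.erase i).sup y) :
    s.card ≤ height (s.sup y) := by
  suffices ∀ t ⊆ s, t.card ≤ height (t.sup y) from this s subset_rfl
  intro t hts
  induction t using Finset.induction_on with
  | empty => simp only [Finset.card_empty, Nat.cast_zero, zero_le]
  | insert i t hit ih =>
    obtain ⟨his, hts⟩ := Finset.insert_subset_iff.1 hts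
    have hlt : t.sup y < (insert i t).sup y := by
      rw [Finset.sup_insert, right_lt_sup]
      exact fun h ↦ hy i his (h.trans (Finset.sup_mono (Finset.subset_erase.2 ⟨hts, hit⟩)))
    rw [Finset.card_insert_of_notMem hit, Nat.cast_add_one]
    exact (add_le_add_left (ih hts) 1).trans (height_add_one_le hlt)

theorem nDistributive_of_height_top_le {α : Type*} [Lattice α] [BoundedOrder α] {n : ℕ}
    (hα : height (⊤ : α) ≤ n) : NDistributive α n := by
  intro x y
  refine le_antisymm ?_ (Finset.sup_le fun j _ ↦
    inf_le_inf_left x (Finset.sup_mono (Finset.erase_subset j _)))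
  obtain ⟨i, hi⟩ : ∃ i, y i ≤ (Finset.univ.erase i).sup y := by
    by_contra! hy
    have hcard := (card_le_height_sup fun i _ ↦ hy i).trans ((height_mono le_top).trans hα)
    rw [Finset.card_univ, Fintype.card_fin, Nat.cast_le] at hcard
    exact hcard.not_gt n.lt_succ_self
  have hsup : Finset.univ.sup y = (Finset.univ.erase i).sup y := by
    rw [← Finset.insert_erase (Finset.mem_univ i), Finset.sup_insert, Finset.erase_insert_eq_erase,
      Finset.erase_idem, sup_eq_right.2 hi]
  rw [hsup]
  exact Finset.le_sup (f := fun j ↦ x ⊓ (Finset.univ.erase j).sup y) (Finset.mem_univ i)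

end NDistributive

section Nabla

/-- Some nonzero parts of `u` and `v` are perspective. This is encoded by a nonzero axis `c`: in a
modular lattice with `u` and `v` disjoint, `u ⊓ (v ⊔ c)` and `v ⊓ (u ⊔ c)` are then such parts. -/
def PartiallyPerspective {α : Type*} [Lattice α] [OrderBot α] (u v : α) : Prop :=
  ∃ c ≠ ⊥, c ≤ u ⊔ v ∧ Disjoint c u ∧ Disjoint c v

variable {α : Type*} [Lattice α] [BoundedOrder α] {a b j t u v x : α}

theorem exists_le_disjoint_inf_sup_eq [ComplementedLattice α] [IsModularLattice α] (a b : α) :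
    ∃ c ≤ a, Disjoint c b ∧ a ⊓ b ⊔ c = a := by
  obtain ⟨c, hdisj, hsup⟩ :=
    IsModularLattice.exists_disjoint_and_sup_eq (inf_le_left : a ⊓ b ≤ a)
  have hca : c ≤ a := le_sup_right.trans hsup.le
  refine ⟨c, hca, ?_, hsup⟩
  rw [disjoint_iff, ← inf_eq_left.2 hca, inf_assoc]
  exact hdisj.symm.eq_bot

/-- The relation `a ∇ b` of von Neumann and Maeda, which describes the kernels of congruences. It is
usually stated as `(a ⊔ x) ⊓ b = x ⊓ b` for all `x`; the form used here, that `a` lies below every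
complement of `b`, is equivalent to it in complemented modular lattices. -/
def Nabla (a b : α) : Prop :=
  ∀ ⦃y⦄, IsCompl b y → a ≤ y

namespace Nabla

theorem bot_left (b : α) : Nabla ⊥ b :=
  fun _ _ ↦ bot_le

theorem mono_left (h : Nabla b x) (hab : a ≤ b) : Nabla a x :=
  fun _ hy ↦ hab.trans (h hy)

theorem sup_left (ha : Nabla a x) (hb : Nabla b x) : Nabla (a ⊔ b) x :=
  fun _ hy ↦ sup_le (ha hy) (hb hy)

variable [ComplementedLattice α]

theorem eq_bot_of_self (h : Nabla a a) : a = ⊥ := by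
  obtain ⟨y, hy⟩ := exists_isCompl a
  exact hy.disjoint.eq_bot_of_le (h hy)

variable [IsModularLattice α]

theorem symm (h : Nabla a b) : Nabla b a := by
  intro x hx
  obtain ⟨x₁, -, hx₁b, hsup⟩ := exists_le_disjoint_inf_sup_eq x b
  obtain ⟨y, hx₁y, hyb⟩ := hx₁b.exists_isCompl
  have hay : a ≤ y := h hyb.symm
  calc b = (x ⊓ b ⊔ (x₁ ⊔ a)) ⊓ b := by
        rw [← sup_assoc, hsup, sup_comm, hx.sup_eq_top, top_inf_eq]
    _ = x ⊓ b ⊔ (x₁ ⊔ a) ⊓ b := sup_inf_assoc_of_le _ inf_le_right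
    _ ≤ x ⊓ b ⊔ y ⊓ b := sup_le_sup_left (inf_le_inf_right b (sup_le hx₁y hay)) _
    _ ≤ x := by rw [hyb.inf_eq_bot, sup_bot_eq]; exact inf_le_left

theorem of_isCompl_of_isCompl (h : Nabla j v) (hjx : IsCompl j x) (htx : IsCompl t x) :
    Nabla t v := by
  intro y hvy
  have hvx : v ≤ x := h.symm hjx
  have hx : v ⊔ x ⊓ y = x := by
    rw [inf_comm, ← sup_inf_assoc_of_le y hvx, hvy.sup_eq_top, top_inf_eq]
  have hy : j ⊔ x ⊓ y = y := by
    rw [← sup_inf_assoc_of_le x (h hvy), hjx.sup_eq_top, top_inf_eq]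
  have hcompl : IsCompl v (x ⊓ y ⊔ t) := by
    refine (hvy.disjoint.mono_right inf_le_right).isCompl_sup_right_of_isCompl_sup_left ?_
    rw [hx]; exact htx.symm
  have hle : y ≤ x ⊓ y ⊔ t := hy.ge.trans (sup_le (h hcompl) le_sup_left)
  have heq : y = x ⊓ y ⊔ t := eq_of_le_of_inf_le_of_sup_le (z := v) hle
    (by rw [hcompl.symm.inf_eq_bot]; exact bot_le) (by rw [hvy.symm.sup_eq_top]; exact le_top)
  exact le_sup_right.trans heq.ge

theorem of_le_sup_of_disjoint (h : Nabla j v) (htx : Disjoint t x) (ht : t ≤ x ⊔ j) :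
    Nabla t v := by
  obtain ⟨w, hw⟩ := exists_isCompl (x ⊔ j)
  have hty : Disjoint t (x ⊔ w) :=
    htx.disjoint_sup_right_of_disjoint_sup_left (hw.disjoint.mono_left (sup_le ht le_sup_left))
  have hjy : Codisjoint j (x ⊔ w) := by
    rw [codisjoint_iff, ← sup_assoc, sup_comm j x, hw.sup_eq_top]
  obtain ⟨j₁, hj₁, hj₁y⟩ := hjy.exists_isCompl
  obtain ⟨t₁, ht₁, ht₁y⟩ := hty.exists_isCompl
  exact ((h.mono_left hj₁).of_isCompl_of_isCompl hj₁y ht₁y).mono_left ht₁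

end Nabla

theorem partiallyPerspective_of_not_nabla [ComplementedLattice α] [IsModularLattice α]
    (huv : Disjoint u v) (h : ¬ Nabla u v) : PartiallyPerspective u v := by
  simp only [Nabla, not_forall] at h
  obtain ⟨y, hvy, huy⟩ := h
  obtain ⟨u₁, hu₁u, hu₁y, hsup⟩ := exists_le_disjoint_inf_sup_eq u y
  have hu₁ : u₁ ≠ ⊥ := by
    rintro rfl
    exact huy (by rw [← hsup, sup_bot_eq]; exact inf_le_right)
  have hsup_v : v ⊔ (u₁ ⊔ v) ⊓ y = u₁ ⊔ v := by
    rw [inf_comm, ← sup_inf_assoc_of_le y le_sup_right, hvy.sup_eq_top, top_inf_eq]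
  have hinf_u : (u₁ ⊔ v) ⊓ u = u₁ := by
    rw [sup_inf_assoc_of_le v hu₁u, huv.symm.eq_bot, sup_bot_eq]
  refine ⟨(u₁ ⊔ v) ⊓ y, fun hbot ↦ hu₁ ?_, inf_le_left.trans (sup_le_sup_right hu₁u v), ?_,
    hvy.symm.disjoint.mono_left inf_le_right⟩
  · rw [hbot, sup_bot_eq, eq_comm, sup_eq_right] at hsup_v
    exact (huv.mono_left hu₁u).eq_bot_of_le hsup_v
  · rw [disjoint_iff, inf_right_comm, hinf_u]
    exact hu₁y.eq_bot

end Nabla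

namespace Ortholattice

variable {α : Type*} [Ortholattice α]

theorem isCompl (x : α) : IsCompl x x′ :=
  ⟨disjoint_iff.2 (inf_compl x), codisjoint_iff.2 (sup_compl x)⟩

instance : ComplementedLattice α :=
  ⟨fun x ↦ ⟨x′, isCompl x⟩⟩

theorem compl_sup (x y : α) : (x ⊔ y)′ = x′ ⊓ y′ := by
  refine le_antisymm
    (le_inf (compl_antitone _ _ le_sup_left) (compl_antitone _ _ le_sup_right)) ?_
  rw [← compl_compl (x′ ⊓ y′)]
  refine compl_antitone _ _ (sup_le ?_ ?_)
  · exact (compl_compl x).symm.trans_le (compl_antitone _ _ inf_le_left)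
  · exact (compl_compl y).symm.trans_le (compl_antitone _ _ inf_le_right)

theorem inf_eq_compl_sup_compl (x y : α) : x ⊓ y = (x′ ⊔ y′)′ := by
  rw [compl_sup, compl_compl, compl_compl]

theorem sup_inf_compl_of_le [IsModularLattice α] {x y : α} (hxy : x ≤ y) : x ⊔ y ⊓ x′ = y := by
  rw [inf_comm, ← sup_inf_assoc_of_le _ hxy, sup_compl, top_inf_eq]

theorem sup_inf_compl_inf_ne_bot [IsModularLattice α] {a b : α} (hne : a ≠ b) :
    (a ⊔ b) ⊓ (a ⊓ b)′ ≠ ⊥ := by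
  intro hbot
  have heq := sup_inf_compl_of_le (inf_le_sup : a ⊓ b ≤ a ⊔ b)
  rw [hbot, sup_bot_eq] at heq
  exact hne (inf_eq_sup.1 heq)

end Ortholattice

section Congruence

open Ortholattice

variable {α : Type*} [Ortholattice α] {r : α → α → Prop} {V : Set α} {a b j k u v x : α}

namespace IsOLCongruence

theorem of_sup_compl (hr : Equivalence r)
    (hsup : ∀ a b c d, r a b → r c d → r (a ⊔ c) (b ⊔ d)) (hcompl : ∀ a b, r a b → r a′ b′) :
    IsOLCongruence α r := by
  refine ⟨hr, fun a b c d hab hcd ↦ ⟨?_, hsup a b c d hab hcd⟩, hcompl⟩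
  rw [inf_eq_compl_sup_compl, inf_eq_compl_sup_compl b]
  exact hcompl _ _ (hsup _ _ _ _ (hcompl _ _ hab) (hcompl _ _ hcd))

theorem sup_inf_compl_inf (hr : IsOLCongruence α r) (hab : r a b) :
    r ((a ⊔ b) ⊓ (a ⊓ b)′) ⊥ := by
  obtain ⟨hequiv, hlat, hcompl⟩ := hr
  have hsup : r (a ⊔ b) b := by simpa only [sup_idem] using (hlat a b b b hab (hequiv.refl b)).2
  have hinf : r (a ⊓ b) b := by simpa only [inf_idem] using (hlat a b b b hab (hequiv.refl b)).1
  rw [← inf_compl b]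
  exact (hlat _ _ _ _ hsup (hcompl _ _ hinf)).1

end IsOLCongruence

/-- An ortholattice is finitely subdirectly irreducible if the intersection of any two nontrivial
congruences is nontrivial. This weakening of subdirect irreducibility suffices to relate dimension
and distributivity. The one-element ortholattice satisfies it vacuously. -/
def FinitelySubdirectlyIrreducible (α : Type*) [Ortholattice α] : Prop :=
  ∀ r s : α → α → Prop, IsOLCongruence α r → IsOLCongruence α s →
    (∃ a b, a ≠ b ∧ r a b) → (∃ a b, a ≠ b ∧ s a b) → ∃ a b, a ≠ b ∧ r a b ∧ s a b

theorem SubdirectlyIrreducible.finitelySubdirectlyIrreducible (hα : SubdirectlyIrreducible α) :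
    FinitelySubdirectlyIrreducible α := by
  obtain ⟨m, -, ⟨a, b, hne, hab⟩, hleast⟩ := hα
  exact fun r s hr hs hr' hs' ↦ ⟨a, b, hne, hleast r hr hr' a b hab, hleast s hs hs' a b hab⟩

/-- The polar `V^∇` of `V` under the relation `∇`. It is the kernel of `polarCongruence V`. -/
def nablaPolar (V : Set α) : Set α :=
  {u | ∀ v ∈ V, Nabla u v}

/-- The congruence of a modular ortholattice with kernel `nablaPolar V`, where elements are
identified when they agree after joining with some element of the kernel. -/
def polarCongruence (V : Set α) (x y : α) : Prop :=
  ∃ j ∈ nablaPolar V, x ⊔ j = y ⊔ j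

theorem bot_mem_nablaPolar (V : Set α) : ⊥ ∈ nablaPolar V :=
  fun v _ ↦ Nabla.bot_left v

theorem sup_mem_nablaPolar (hj : j ∈ nablaPolar V) (hk : k ∈ nablaPolar V) :
    j ⊔ k ∈ nablaPolar V :=
  fun v hv ↦ (hj v hv).sup_left (hk v hv)

theorem mem_nablaPolar_of_polarCongruence_bot (h : polarCongruence V x ⊥) : x ∈ nablaPolar V := by
  obtain ⟨j, hj, hxj⟩ := h
  have hx : x ≤ j := le_sup_left.trans (hxj.trans (bot_sup_eq j)).le
  exact fun v hv ↦ (hj v hv).mono_left hx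

theorem polarCongruence_bot (hx : x ∈ nablaPolar V) : polarCongruence V x ⊥ :=
  ⟨x, hx, by rw [sup_idem, bot_sup_eq]⟩

theorem equivalence_polarCongruence (V : Set α) : Equivalence (polarCongruence V) where
  refl _ := ⟨⊥, bot_mem_nablaPolar V, rfl⟩
  symm := fun ⟨j, hj, h⟩ ↦ ⟨j, hj, h.symm⟩
  trans := fun {x y z} ⟨j, hj, hxy⟩ ⟨k, hk, hyz⟩ ↦ ⟨j ⊔ k, sup_mem_nablaPolar hj hk, by
    rw [← sup_assoc, hxy, sup_right_comm, hyz, sup_right_comm, sup_assoc]⟩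

variable [IsModularLattice α]

theorem polarCongruence_compl_sup (hj : j ∈ nablaPolar V) (x : α) :
    polarCongruence V (x ⊔ j)′ x′ := by
  have hk : (x′ ⊓ (x ⊔ j)) ∈ nablaPolar V := fun v hv ↦
    (hj v hv).of_le_sup_of_disjoint ((isCompl x).symm.disjoint.mono_left inf_le_left) inf_le_right
  refine ⟨_, hk, ?_⟩
  have heq := sup_inf_compl_of_le (compl_antitone x (x ⊔ j) le_sup_left)
  rw [Ortholattice.compl_compl] at heq
  rw [heq, sup_eq_left.2 inf_le_left]

theorem isOLCongruence_polarCongruence (V : Set α) : IsOLCongruence α (polarCongruence V) := by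
  have hequiv := equivalence_polarCongruence V
  refine .of_sup_compl hequiv ?_ ?_
  · rintro a b c d ⟨j, hj, hab⟩ ⟨k, hk, hcd⟩
    exact ⟨j ⊔ k, sup_mem_nablaPolar hj hk, by rw [sup_sup_sup_comm, hab, hcd, sup_sup_sup_comm]⟩
  · rintro a b ⟨j, hj, hab⟩
    have hb := polarCongruence_compl_sup hj b
    rw [← hab] at hb
    exact hequiv.trans (hequiv.symm (polarCongruence_compl_sup hj a)) hb

theorem FinitelySubdirectlyIrreducible.not_nabla (hα : FinitelySubdirectlyIrreducible α)
    (hu : u ≠ ⊥) (hv : v ≠ ⊥) : ¬ Nabla u v := by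
  intro huv
  have hu' : u ∈ nablaPolar {v} := fun w hw ↦ by rwa [Set.mem_singleton_iff.1 hw]
  have hv' : v ∈ nablaPolar (nablaPolar {v}) := fun w hw ↦ (hw v rfl).symm
  have hr := isOLCongruence_polarCongruence ({v} : Set α)
  have hs := isOLCongruence_polarCongruence (nablaPolar {v})
  obtain ⟨a, b, hne, hrab, hsab⟩ := hα _ _ hr hs
    ⟨u, ⊥, hu, polarCongruence_bot hu'⟩ ⟨v, ⊥, hv, polarCongruence_bot hv'⟩
  have hw := mem_nablaPolar_of_polarCongruence_bot (hr.sup_inf_compl_inf hrab)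
  have hw' := mem_nablaPolar_of_polarCongruence_bot (hs.sup_inf_compl_inf hsab)
  exact sup_inf_compl_inf_ne_bot hne (hw' _ hw).eq_bot_of_self

end Congruence

section IndependentFamily

variable {α : Type*} [Lattice α] [IsModularLattice α]

theorem disjoint_of_le_sup_of_disjoint [OrderBot α] {a c x s : α} (hxs : x ≤ s) (has : Disjoint a s)
    (hc : c ≤ x ⊔ a) (hcx : Disjoint c x) : Disjoint c s := by
  have hinf : (x ⊔ a) ⊓ s = x := by rw [sup_inf_assoc_of_le a hxs, has.eq_bot, sup_bot_eq]
  rw [disjoint_iff, ← inf_eq_left.2 hc, inf_assoc, hinf]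
  exact hcx.eq_bot

theorem exists_ne_bot_le_sup_disjoint_sup_erase [OrderBot α]
    (hα : ∀ ⦃u v : α⦄, u ≠ ⊥ → v ≠ ⊥ → Disjoint u v → PartiallyPerspective u v)
    {ι : Type*} [DecidableEq ι] {s : Finset ι} (hs : s.Nonempty) {a : ι → α}
    (ha : ∀ i, a i ≠ ⊥) (hind : s.SupIndep a) :
    ∃ x ≠ ⊥, x ≤ s.sup a ∧ ∀ j ∈ s, Disjoint x ((s.erase j).sup a) := by
  induction hs using Finset.Nonempty.cons_induction with
  | singleton i =>
    refine ⟨a i, ha i, Finset.sup_singleton.ge, fun j hj ↦ ?_⟩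
    rw [Finset.mem_singleton.1 hj, Finset.erase_singleton, Finset.sup_empty]
    exact disjoint_bot_right
  | cons i s hi _ ih =>
    rw [Finset.cons_eq_insert] at hind ⊢
    obtain ⟨x, hx, hxs, hdisj⟩ := ih (hind.subset (Finset.subset_insert i s))
    have his : Disjoint (a i) (s.sup a) :=
      hind (Finset.subset_insert i s) (Finset.mem_insert_self i s) hi
    obtain ⟨c, hc, hcx, hc₁, hc₂⟩ := hα hx (ha i) (his.symm.mono_left hxs)
    refine ⟨c, hc, hcx.trans ?_, fun j hj ↦ ?_⟩
    · rw [Finset.sup_insert]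
      exact sup_le (hxs.trans le_sup_right) le_sup_left
    obtain rfl | hj := Finset.mem_insert.1 hj
    · rw [Finset.erase_insert hi]
      exact disjoint_of_le_sup_of_disjoint hxs his hcx hc₁
    · rw [Finset.erase_insert_of_ne (by rintro rfl; exact hi hj), Finset.sup_insert]
      have hle : x ⊔ (s.erase j).sup a ≤ s.sup a :=
        sup_le hxs (Finset.sup_mono (Finset.erase_subset j s))
      have hdisj' : Disjoint x (a i ⊔ (s.erase j).sup a) := by
        rw [sup_comm]
        exact (hdisj j hj).disjoint_sup_right_of_disjoint_sup_left (his.symm.mono_left hle)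
      exact disjoint_of_le_sup_of_disjoint le_sup_left hdisj' (hcx.trans_eq (sup_comm _ _)) hc₂

theorem exists_supIndep_of_ltSeries [BoundedOrder α] [ComplementedLattice α] (p : LTSeries α) :
    ∃ a : Fin p.length → α, (∀ i, a i ≠ ⊥) ∧ Finset.univ.SupIndep a := by
  choose a hdisj hsup using fun i : Fin p.length ↦
    IsModularLattice.exists_disjoint_and_sup_eq (p.step i).le
  refine ⟨a, fun i hi ↦ ?_, ?_⟩
  · have heq := hsup i
    rw [hi, sup_bot_eq] at heq
    exact (p.step i).ne heq
  · induction (Finset.univ : Finset (Fin p.length)) using Finset.induction_on_max with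
    | empty => exact Finset.supIndep_empty a
    | insert i s hlt ih =>
      refine ih.insert ((hdisj i).symm.mono_right (Finset.sup_le fun j hj ↦ ?_))
      calc a j ≤ p j.succ := le_sup_right.trans (hsup j).le
        _ ≤ p i.castSucc := p.monotone (Fin.succ_le_castSucc_iff.2 (hlt j hj))

theorem NDistributive.height_top_le [BoundedOrder α] [ComplementedLattice α]
    (hα : ∀ ⦃u v : α⦄, u ≠ ⊥ → v ≠ ⊥ → Disjoint u v → PartiallyPerspective u v)
    {n : ℕ} (hn : NDistributive α n) : Order.height (⊤ : α) ≤ n := by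
  by_contra! hlt
  obtain ⟨p, -, hp⟩ := Order.exists_series_of_le_height (⊤ : α) (n := n + 1) (by
    exact_mod_cast Order.add_one_le_of_lt hlt)
  obtain ⟨a, ha, hind⟩ := hp ▸ exists_supIndep_of_ltSeries p
  obtain ⟨x, hx, hxa, hdisj⟩ :=
    exists_ne_bot_le_sup_disjoint_sup_erase hα Finset.univ_nonempty ha hind
  refine hx (le_bot_iff.1 ?_)
  calc x = x ⊓ Finset.univ.sup a := (inf_eq_left.2 hxa).symm
    _ = Finset.univ.sup fun j ↦ x ⊓ (Finset.univ.erase j).sup a := hn x a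
    _ ≤ ⊥ := Finset.sup_le fun j hj ↦ (hdisj j hj).le_bot

end IndependentFamily

theorem FinitelySubdirectlyIrreducible.nDistributive_iff_height_top_le {α : Type*} [Ortholattice α]
    [IsModularLattice α] (hα : FinitelySubdirectlyIrreducible α) {n : ℕ} :
    NDistributive α n ↔ Order.height (⊤ : α) ≤ n :=
  ⟨fun h ↦ h.height_top_le fun _ _ hu hv huv ↦
    partiallyPerspective_of_not_nabla huv (hα.not_nabla hu hv), nDistributive_of_height_top_le⟩

theorem stmt12_general (α : Type*) [Ortholattice α] [IsModularLattice α] (n : ℕ) (hn : 1 ≤ n)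
    (hα : FinitelySubdirectlyIrreducible α) :
    ((∃ d ≤ n, HasDim α d) ↔ NDistributive α n) ∧
    (HasDim α n ↔ (NDistributive α n ∧ ¬ NDistributive α (n - 1))) := by
  rw [exists_le_hasDim_iff_height_top_le, hasDim_iff_height_top_eq,
    hα.nDistributive_iff_height_top_le, hα.nDistributive_iff_height_top_le]
  obtain ⟨m, rfl⟩ := Nat.exists_eq_add_of_le' hn
  rw [Nat.add_sub_cancel, not_le, le_antisymm_iff, Nat.cast_add_one,
    ENat.add_one_le_iff (ENat.natCast_ne_top m)]
  exact ⟨Iff.rfl, Iff.rfl⟩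

/-- Let `n ≥ 1`.  A subdirectly irreducible modular ortholattice has dimension at most `n`
iff it is `n`-distributive; consequently it has dimension exactly `n` iff it is
`n`-distributive but not `(n-1)`-distributive. -/
theorem stmt12 (α : Type*) [Ortholattice α] [IsModularLattice α] (n : ℕ) (hn : 1 ≤ n)
    (hsi : SubdirectlyIrreducible α) :
    ((∃ d ≤ n, HasDim α d) ↔ NDistributive α n) ∧
    (HasDim α n ↔ (NDistributive α n ∧ ¬ NDistributive α (n - 1))) :=
  stmt12_general α n hn hsi.finitelySubdirectlyIrreducible
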